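/- Let f = x⁴ + y⁴ + z⁴ + x·y²·z² in ℂ[x,y,z], and let J₁ be the ideal of ℂ[[x,y,z]] generated by the images of the twelve polynomials x·f, y·f, z·f, f − x·∂f/∂x, x·∂f/∂y, x·∂f/∂z, y·∂f/∂x, f − y·∂f/∂y, y·∂f/∂z, z·∂f/∂x, z·∂f/∂y, f − z·∂f/∂z. Then the image of the monomial x·y²·z² in ℂ[[x,y,z]] does not belong to J₁. -/

import Mathlib

open MvPolynomial

/-- The canonical ring homomorphism `ℂ[x,y,z] → ℂ[[x,y,z]]`. -/
noncomputable def ι : MvPolynomial (Fin 3) ℂ →+* MvPowerSeries (Fin 3) ℂ :=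
  MvPolynomial.coeToMvPowerSeries.ringHom

/-- The polynomial `f = x⁴ + y⁴ + z⁴ + x·y²·z²` in `ℂ[x,y,z]`. -/
noncomputable def f : MvPolynomial (Fin 3) ℂ :=
  X 0 ^ 4 + X 1 ^ 4 + X 2 ^ 4 + X 0 * X 1 ^ 2 * X 2 ^ 2

/-- The ideal `J₁` of `ℂ[[x,y,z]]` generated by the images of
`x·f, y·f, z·f` and `δ_{ij}·f − xᵢ·(∂f/∂xⱼ)` for `i, j = 1, 2, 3`. -/
noncomputable def J₁ : Ideal (MvPowerSeries (Fin 3) ℂ) :=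
  Ideal.span
    { ι (X 0 * f), ι (X 1 * f), ι (X 2 * f),
      ι (f - X 0 * pderiv 0 f), ι (X 0 * pderiv 1 f), ι (X 0 * pderiv 2 f),
      ι (X 1 * pderiv 0 f), ι (f - X 1 * pderiv 1 f), ι (X 1 * pderiv 2 f),
      ι (X 2 * pderiv 0 f), ι (X 2 * pderiv 1 f), ι (f - X 2 * pderiv 2 f) }

/-!
The exponents of the four monomials of `f` are so far apart that the coefficients of `g f` and of
`g xᵢ ∂ⱼf` at these exponents depend on the power series `g` only through `g(0)`. There `xᵢ ∂ⱼf` has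
coefficient zero if `i ≠ j`, while by Euler's rule `xᵢ ∂ᵢ` multiplies a coefficient by the exponent
of `xᵢ`. A linear combination of the four coefficients therefore vanishes on `J₁` as soon as its
weights solve three linear equations in four unknowns, and the solution is nonzero at `x y² z²`.
-/

open Finsupp (single)

section IsolatedExponent

variable {σ R : Type*} [Semiring R]

lemma coeff_mul_eq_constantCoeff_mul_coeff_of_forall_lt {a : σ →₀ ℕ} {s : MvPowerSeries σ R}
    (hs : ∀ b < a, MvPowerSeries.coeff b s = 0) (g : MvPowerSeries σ R) :
    MvPowerSeries.coeff a (g * s) =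
      MvPowerSeries.constantCoeff g * MvPowerSeries.coeff a s := by
  classical
  rw [MvPowerSeries.coeff_mul, Finset.sum_eq_single (0, a)]
  · rfl
  · rintro ⟨c, b⟩ hcb hne
    obtain rfl : c + b = a := Finset.HasAntidiagonal.mem_antidiagonal.mp hcb
    have hc : c ≠ 0 := by rintro rfl; simp at hne
    rw [hs b (lt_add_of_pos_left b (pos_iff_ne_zero.mpr hc)), mul_zero]
  · simp

lemma coeff_X_mul_of_apply_eq_zero {b : σ →₀ ℕ} {i : σ} (hb : b i = 0)
    (q : MvPowerSeries σ R) : MvPowerSeries.coeff b (MvPowerSeries.X i * q) = 0 := by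
  rw [MvPowerSeries.X, MvPowerSeries.coeff_monomial_mul, if_neg]
  simp [hb]

/-- The exponent `a` is isolated in the power series `p` if, for `xᵇ` occurring in `p`, the
monomial `xᵢ xᵇ` divides `xⱼ xᵃ` only when `b = a` and `i = j`. At such exponents the
coefficients of `g p` and `g xᵢ ∂ⱼp` depend on the power series `g` only through `g(0)`. -/
def IsIsolatedExponent (p : MvPowerSeries σ R) (a : σ →₀ ℕ) : Prop :=
  ∀ ⦃b⦄, MvPowerSeries.coeff b p ≠ 0 → ∀ ⦃i j⦄,
    b + single i 1 ≤ a + single j 1 → b = a ∧ i = j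

variable {p : MvPowerSeries σ R} {a b : σ →₀ ℕ}

lemma IsIsolatedExponent.coeff_eq_zero_of_lt (ha : IsIsolatedExponent p a) (hba : b < a) :
    MvPowerSeries.coeff b p = 0 := by
  by_contra hb
  obtain ⟨-, i, -⟩ := Finsupp.lt_def.mp hba
  exact hba.ne (ha hb (add_le_add_left hba.le (single i 1))).1

lemma IsIsolatedExponent.coeff_mul_X_mul (ha : IsIsolatedExponent p a)
    (g : MvPowerSeries σ R) (i : σ) :
    MvPowerSeries.coeff a (g * (MvPowerSeries.X i * p)) = 0 := by
  rw [← mul_assoc,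
    coeff_mul_eq_constantCoeff_mul_coeff_of_forall_lt fun b => ha.coeff_eq_zero_of_lt]
  simp

end IsolatedExponent

section PartialDerivatives

variable {σ R : Type*} [CommSemiring R]

lemma coeff_add_single_X_mul_pderiv (p : MvPowerSeries σ R) (b : σ →₀ ℕ) (i j : σ) :
    MvPowerSeries.coeff (b + single i 1) (MvPowerSeries.X i * MvPowerSeries.pderiv R j p) =
      MvPowerSeries.coeff (b + single j 1) p * (b j + 1) := by
  rw [MvPowerSeries.X_mul, MvPowerSeries.X, MvPowerSeries.coeff_add_mul_monomial, mul_one,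
    MvPowerSeries.coeff_pderiv]

lemma coeff_X_mul_pderiv_self (p : MvPowerSeries σ R) (b : σ →₀ ℕ) (i : σ) :
    MvPowerSeries.coeff b (MvPowerSeries.X i * MvPowerSeries.pderiv R i p) =
      b i * MvPowerSeries.coeff b p := by
  by_cases hb : b i = 0
  · rw [coeff_X_mul_of_apply_eq_zero hb, hb, Nat.cast_zero, zero_mul]
  · obtain ⟨c, rfl⟩ : ∃ c, b = c + single i 1 :=
      ⟨b - single i 1, (Finsupp.sub_add_single_one_cancel hb).symm⟩
    simp [coeff_add_single_X_mul_pderiv, mul_comm]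

lemma IsIsolatedExponent.coeff_X_mul_pderiv_of_ne {p : MvPowerSeries σ R} {a b : σ →₀ ℕ}
    (ha : IsIsolatedExponent p a) (hba : b ≤ a) {i j : σ} (hij : i ≠ j) :
    MvPowerSeries.coeff b (MvPowerSeries.X i * MvPowerSeries.pderiv R j p) = 0 := by
  by_cases hb : b i = 0
  · exact coeff_X_mul_of_apply_eq_zero hb _
  · obtain ⟨c, rfl⟩ : ∃ c, b = c + single i 1 :=
      ⟨b - single i 1, (Finsupp.sub_add_single_one_cancel hb).symm⟩
    rw [coeff_add_single_X_mul_pderiv]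
    by_contra hne
    have hle : c + single j 1 + single i 1 ≤ a + single j 1 := by
      rw [add_right_comm]
      exact add_le_add_left hba _
    exact hij (ha (left_ne_zero_of_mul hne) hle).2

end PartialDerivatives

section PoleIdeal

variable {σ R : Type*} [DecidableEq σ] [CommRing R]

/-- The power series `δᵢⱼ p - xᵢ ∂ⱼp`, which is the numerator of `∂ⱼ(xᵢ / p)` over `p²`. -/
noncomputable def poleNumerator (p : MvPowerSeries σ R) (i j : σ) : MvPowerSeries σ R :=
  (if i = j then p else 0) - MvPowerSeries.X i * MvPowerSeries.pderiv R j p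

/-- The ideal generated by the `xᵢ p` and the `δᵢⱼ p - xᵢ ∂ⱼp`; it is `J₁` when `p = f`. -/
noncomputable def poleIdeal (p : MvPowerSeries σ R) : Ideal (MvPowerSeries σ R) :=
  Ideal.span (Set.range (fun i => MvPowerSeries.X i * p) ∪
    Set.range fun ij : σ × σ => poleNumerator p ij.1 ij.2)

lemma X_mul_mem_poleIdeal (p : MvPowerSeries σ R) (i : σ) :
    MvPowerSeries.X i * p ∈ poleIdeal p :=
  Ideal.subset_span (.inl ⟨i, rfl⟩)

lemma poleNumerator_mem_poleIdeal (p : MvPowerSeries σ R) (i j : σ) :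
    poleNumerator p i j ∈ poleIdeal p :=
  Ideal.subset_span (.inr ⟨(i, j), rfl⟩)

lemma sub_X_mul_pderiv_mem_poleIdeal (p : MvPowerSeries σ R) (i : σ) :
    p - MvPowerSeries.X i * MvPowerSeries.pderiv R i p ∈ poleIdeal p := by
  simpa [poleNumerator] using poleNumerator_mem_poleIdeal p i i

lemma X_mul_pderiv_mem_poleIdeal (p : MvPowerSeries σ R) {i j : σ} (hij : i ≠ j) :
    MvPowerSeries.X i * MvPowerSeries.pderiv R j p ∈ poleIdeal p := by
  simpa [poleNumerator, hij] using poleNumerator_mem_poleIdeal p i j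

lemma IsIsolatedExponent.coeff_poleNumerator {p : MvPowerSeries σ R} {a b : σ →₀ ℕ}
    (ha : IsIsolatedExponent p a) (hba : b ≤ a) (i j : σ) :
    MvPowerSeries.coeff b (poleNumerator p i j) =
      if i = j then (1 - b i) * MvPowerSeries.coeff b p else 0 := by
  split_ifs with hij
  · subst hij
    simp [poleNumerator, coeff_X_mul_pderiv_self, sub_mul]
  · simp [poleNumerator, hij, ha.coeff_X_mul_pderiv_of_ne hba hij]

lemma IsIsolatedExponent.coeff_mul_poleNumerator {p : MvPowerSeries σ R} {a : σ →₀ ℕ}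
    (ha : IsIsolatedExponent p a) (g : MvPowerSeries σ R) (i j : σ) :
    MvPowerSeries.coeff a (g * poleNumerator p i j) =
      MvPowerSeries.constantCoeff g *
        if i = j then (1 - a i) * MvPowerSeries.coeff a p else 0 := by
  rw [coeff_mul_eq_constantCoeff_mul_coeff_of_forall_lt, ha.coeff_poleNumerator le_rfl]
  intro b hba
  rw [ha.coeff_poleNumerator hba.le, ha.coeff_eq_zero_of_lt hba, mul_zero, ite_self]

theorem sum_mul_coeff_eq_zero_of_mem_poleIdeal {κ : Type*} [Fintype κ] {p : MvPowerSeries σ R}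
    {e : κ → σ →₀ ℕ} {w : κ → R} (he : ∀ k, IsIsolatedExponent p (e k))
    (hw : ∀ i, ∑ k, w k * ((1 - e k i) * MvPowerSeries.coeff (e k) p) = 0)
    {q : MvPowerSeries σ R} (hq : q ∈ poleIdeal p) :
    ∑ k, w k * MvPowerSeries.coeff (e k) q = 0 := by
  induction hq using Submodule.closure_induction with
  | zero => simp
  | add q r _ _ hq hr => simp only [map_add, mul_add, Finset.sum_add_distrib, hq, hr, add_zero]
  | smul_mem g s hs =>
    rcases hs with ⟨i, rfl⟩ | ⟨⟨i, j⟩, rfl⟩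
    · simp [(he _).coeff_mul_X_mul]
    · simp only [smul_eq_mul, (he _).coeff_mul_poleNumerator, mul_left_comm (w _),
        ← Finset.mul_sum]
      by_cases hij : i = j
      · simp [hij, hw]
      · simp [hij]

end PoleIdeal

lemma ι_X (i : Fin 3) : ι (X i) = MvPowerSeries.X i :=
  MvPolynomial.coe_X i

lemma ι_pderiv (i : Fin 3) (p : MvPolynomial (Fin 3) ℂ) :
    ι (pderiv i p) = MvPowerSeries.pderiv ℂ i (ι p) :=
  (MvPowerSeries.pderiv_coe p).symm

lemma J₁_le_poleIdeal : J₁ ≤ poleIdeal (ι f) := by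
  rw [J₁, Ideal.span_le]
  simp [Set.insert_subset_iff, ι_X, ι_pderiv, X_mul_mem_poleIdeal,
    sub_X_mul_pderiv_mem_poleIdeal, X_mul_pderiv_mem_poleIdeal]

/-- The matrix whose rows are the exponents of the monomials `x⁴`, `y⁴`, `z⁴`, `xy²z²` of `f`. -/
def exponentMatrix : Matrix (Fin 4) (Fin 3) ℕ :=
  !![4, 0, 0; 0, 4, 0; 0, 0, 4; 1, 2, 2]

/-- The rows of `exponentMatrix`, as exponents of monomials. -/
noncomputable def rowExponent (k : Fin 4) : Fin 3 →₀ ℕ :=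
  Finsupp.equivFunOnFinite.symm (exponentMatrix k)

lemma rowExponent_apply (k : Fin 4) (i : Fin 3) : rowExponent k i = exponentMatrix k i :=
  rfl

lemma eq_of_rowExponent_add_single_le {k l : Fin 4} {i j : Fin 3}
    (h : rowExponent k + single i 1 ≤ rowExponent l + single j 1) : k = l ∧ i = j := by
  have hrows : ∀ k l i j, (∀ s, exponentMatrix k s + (Pi.single i 1 : Fin 3 → ℕ) s ≤
      exponentMatrix l s + (Pi.single j 1 : Fin 3 → ℕ) s) → k = l ∧ i = j := by
    decide
  refine hrows k l i j fun s => ?_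
  simpa [rowExponent_apply, Finsupp.single_eq_pi_single] using h s

lemma rowExponent_injective : Function.Injective rowExponent := fun k l hkl =>
  (eq_of_rowExponent_add_single_le (i := 0) (j := 0) (by rw [hkl])).1

lemma monomial_rowExponent (k : Fin 4) :
    monomial (rowExponent k) (1 : ℂ) = X 0 ^ exponentMatrix k 0 * X 1 ^ exponentMatrix k 1 *
      X 2 ^ exponentMatrix k 2 := by
  simp [monomial_eq, Finsupp.prod_fintype, Fin.prod_univ_three, rowExponent_apply]

lemma f_eq_sum_monomial : f = ∑ k, monomial (rowExponent k) (1 : ℂ) := by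
  simp [f, monomial_rowExponent, exponentMatrix, Fin.sum_univ_four]

lemma coeff_ι_monomial (a b : Fin 3 →₀ ℕ) :
    MvPowerSeries.coeff a (ι (monomial b 1)) = if b = a then 1 else 0 := by
  classical
  exact (coeff_coe _ _).trans (coeff_monomial a b 1)

lemma coeff_rowExponent_ι_f (k : Fin 4) : MvPowerSeries.coeff (rowExponent k) (ι f) = 1 := by
  simp [f_eq_sum_monomial, coeff_ι_monomial, rowExponent_injective.eq_iff]

lemma exists_rowExponent_eq_of_coeff_ι_f_ne_zero {b : Fin 3 →₀ ℕ}
    (hb : MvPowerSeries.coeff b (ι f) ≠ 0) : ∃ k, rowExponent k = b := by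
  contrapose! hb
  simp [f_eq_sum_monomial, coeff_ι_monomial, hb]

lemma isIsolatedExponent_rowExponent (l : Fin 4) :
    IsIsolatedExponent (ι f) (rowExponent l) := by
  intro b hb i j hle
  obtain ⟨k, rfl⟩ := exists_rowExponent_eq_of_coeff_ι_f_ne_zero hb
  obtain ⟨rfl, rfl⟩ := eq_of_rowExponent_add_single_le hle
  exact ⟨rfl, rfl⟩

/-- The weights `w`, unique up to scaling, for which the rows `eₖ` of `exponentMatrix` satisfy
`∑ₖ wₖ (1 - eₖᵢ) = 0` for every `i`. -/
def rowWeight : Fin 4 → ℂ :=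
  ![-2, -3, -3, 4]

lemma sum_rowWeight_mul_one_sub_rowExponent (i : Fin 3) :
    ∑ k, rowWeight k * (1 - rowExponent k i) = 0 := by
  fin_cases i <;>
    · simp only [Fin.sum_univ_four, rowWeight, rowExponent_apply, exponentMatrix,
        Matrix.of_apply, Matrix.cons_val, Fin.reduceFinMk, Fin.zero_eta, Fin.mk_one]
      norm_num

theorem stmt_8 : ι (X 0 * X 1 ^ 2 * X 2 ^ 2) ∉ J₁ := by
  intro hmem
  have hsum := sum_mul_coeff_eq_zero_of_mem_poleIdeal isIsolatedExponent_rowExponent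
    (by simpa [coeff_rowExponent_ι_f] using sum_rowWeight_mul_one_sub_rowExponent)
    (J₁_le_poleIdeal hmem)
  have hmonomial : X 0 * X 1 ^ 2 * X 2 ^ 2 = monomial (rowExponent 3) (1 : ℂ) := by
    simp [monomial_rowExponent, exponentMatrix]
  have hweight : rowWeight 3 = 0 := by
    simpa [hmonomial, coeff_ι_monomial, rowExponent_injective.eq_iff] using hsum
  simp [rowWeight] at hweight
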